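/- Let T be a universal continuous first-order theory. Then the set of separable existentially closed models of T is dense in 𝔖_T. -/

import Mathlib

open scoped Classical

/-! ### A core of continuous first-order logic (countable relational signatures) -/

/-- A countable relational continuous signature: relation symbols indexed by `ℕ`
(with a distinguished metric symbol handled separately in the syntax below),
each with an arity and a prescribed uniform-continuity modulus. -/
structure CSig where
  arity : ℕ → ℕ
  modulus : ℕ → ℝ → ℝ
  modulus_pos : ∀ i ε, 0 < ε → 0 < modulus i ε

/-- Continuous first-order formulas over `S`, with free variables among `Fin n`.
Connectives: rational constants, pointwise min and max, negation `1 - x`,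
truncated plus, truncated minus, `|x - y|`, rescaling by rationals; quantifiers
`inf` and `sup` bind the last variable. -/
inductive CFormula (S : CSig) : ℕ → Type
  | dst : ∀ {n}, Fin n → Fin n → CFormula S n
  | rel : ∀ {n} (i : ℕ), (Fin (S.arity i) → Fin n) → CFormula S n
  | const : ∀ {n}, ℚ → CFormula S n
  | fmin : ∀ {n}, CFormula S n → CFormula S n → CFormula S n
  | fmax : ∀ {n}, CFormula S n → CFormula S n → CFormula S n
  | neg : ∀ {n}, CFormula S n → CFormula S n
  | addT : ∀ {n}, CFormula S n → CFormula S n → CFormula S n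
  | subT : ∀ {n}, CFormula S n → CFormula S n → CFormula S n
  | absd : ∀ {n}, CFormula S n → CFormula S n → CFormula S n
  | scale : ∀ {n}, ℚ → CFormula S n → CFormula S n
  | inf : ∀ {n}, CFormula S (n + 1) → CFormula S n
  | sup : ∀ {n}, CFormula S (n + 1) → CFormula S n

/-- Sentences: formulas with no free variables. -/
abbrev CSentence (S : CSig) := CFormula S 0

/-- Quantifier-free formulas. -/
inductive IsQF {S : CSig} : ∀ {n}, CFormula S n → Prop
  | dst {n} (a b : Fin n) : IsQF (CFormula.dst a b)
  | rel {n} (i : ℕ) (ts : Fin (S.arity i) → Fin n) : IsQF (CFormula.rel i ts)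
  | const {n} (q : ℚ) : IsQF (CFormula.const (n := n) q)
  | fmin {n} {φ ψ : CFormula S n} : IsQF φ → IsQF ψ → IsQF (CFormula.fmin φ ψ)
  | fmax {n} {φ ψ : CFormula S n} : IsQF φ → IsQF ψ → IsQF (CFormula.fmax φ ψ)
  | neg {n} {φ : CFormula S n} : IsQF φ → IsQF (CFormula.neg φ)
  | addT {n} {φ ψ : CFormula S n} : IsQF φ → IsQF ψ → IsQF (CFormula.addT φ ψ)
  | subT {n} {φ ψ : CFormula S n} : IsQF φ → IsQF ψ → IsQF (CFormula.subT φ ψ)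
  | absd {n} {φ ψ : CFormula S n} : IsQF φ → IsQF ψ → IsQF (CFormula.absd φ ψ)
  | scale {n} (q : ℚ) {φ : CFormula S n} : IsQF φ → IsQF (CFormula.scale q φ)

/-- Closure of a class of formulas under (finitely many applications of) `inf`. -/
inductive InfCl {S : CSig} (P : ∀ n, CFormula S n → Prop) : ∀ {n}, CFormula S n → Prop
  | base {n} {φ : CFormula S n} : P n φ → InfCl P φ
  | step {n} {φ : CFormula S (n + 1)} : InfCl P φ → InfCl P (CFormula.inf φ)

/-- Closure of a class of formulas under (finitely many applications of) `sup`. -/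
inductive SupCl {S : CSig} (P : ∀ n, CFormula S n → Prop) : ∀ {n}, CFormula S n → Prop
  | base {n} {φ : CFormula S n} : P n φ → SupCl P φ
  | step {n} {φ : CFormula S (n + 1)} : SupCl P φ → SupCl P (CFormula.sup φ)

/-- The pair (Σₖ, Πₖ) of formula classes: Σ₀ = Π₀ = quantifier-free,
Σ_{k+1} = { inf_x̄ φ : φ ∈ Πₖ }, Π_{k+1} = { sup_x̄ φ : φ ∈ Σₖ }. -/
def SigmaPi (S : CSig) : ℕ → ((∀ n, CFormula S n → Prop) × (∀ n, CFormula S n → Prop))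
  | 0 => (fun _ φ => IsQF φ, fun _ φ => IsQF φ)
  | k + 1 => (fun _ φ => InfCl (SigmaPi S k).2 φ, fun _ φ => SupCl (SigmaPi S k).1 φ)

/-- `φ` is a Σₖ formula. -/
def IsSigmaN (S : CSig) (k : ℕ) {n : ℕ} (φ : CFormula S n) : Prop := (SigmaPi S k).1 n φ

/-- `φ` is a Πₖ formula. -/
def IsPiN (S : CSig) (k : ℕ) {n : ℕ} (φ : CFormula S n) : Prop := (SigmaPi S k).2 n φ

/-- A continuous `L`-structure: a nonempty complete metric space of diameter `≤ 1`
with `[0,1]`-valued interpretations of all predicate symbols, uniformly continuous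
with respect to the prescribed moduli. -/
structure CStructure (S : CSig) where
  Carrier : Type
  metric : MetricSpace Carrier
  nonempty : Nonempty Carrier
  complete : @CompleteSpace Carrier metric.toUniformSpace
  bounded : ∀ x y : Carrier, @dist Carrier metric.toDist x y ≤ 1
  rel : ∀ i, (Fin (S.arity i) → Carrier) → ℝ
  rel_nonneg : ∀ i v, 0 ≤ rel i v
  rel_le_one : ∀ i v, rel i v ≤ 1
  rel_uc : ∀ i (ε : ℝ), 0 < ε → ∀ v w,
    (∀ j, @dist Carrier metric.toDist (v j) (w j) < S.modulus i ε) → |rel i v - rel i w| ≤ ε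

attribute [instance] CStructure.metric CStructure.nonempty CStructure.complete

/-- Clamp a rational constant into `[0,1]`. -/
noncomputable def clampQ (q : ℚ) : ℝ := max 0 (min 1 (q : ℝ))

/-- The value of a formula in a structure under a variable assignment. -/
noncomputable def CStructure.eval {S : CSig} (M : CStructure S) :
    ∀ (n : ℕ), CFormula S n → (Fin n → M.Carrier) → ℝ
  | _, .dst a b, v => dist (v a) (v b)
  | _, .rel i ts, v => M.rel i fun j => v (ts j)
  | _, .const q, _ => clampQ q
  | n, .fmin φ ψ, v => min (M.eval n φ v) (M.eval n ψ v)
  | n, .fmax φ ψ, v => max (M.eval n φ v) (M.eval n ψ v)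
  | n, .neg φ, v => 1 - M.eval n φ v
  | n, .addT φ ψ, v => min 1 (M.eval n φ v + M.eval n ψ v)
  | n, .subT φ ψ, v => max 0 (M.eval n φ v - M.eval n ψ v)
  | n, .absd φ ψ, v => |M.eval n φ v - M.eval n ψ v|
  | n, .scale q φ, v => clampQ q * M.eval n φ v
  | n, .inf φ, v => ⨅ x : M.Carrier, M.eval (n + 1) φ (Fin.snoc v x)
  | n, .sup φ, v => ⨆ x : M.Carrier, M.eval (n + 1) φ (Fin.snoc v x)

/-- The value of a sentence in a structure. -/
noncomputable def CStructure.sval {S : CSig} (M : CStructure S) (φ : CSentence S) : ℝ :=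
  M.eval 0 φ (fun i => i.elim0)

/-- A theory: a set of closed conditions `φ ≤ ε`, coded as pairs `(φ, ε)`. -/
abbrev CTheory (S : CSig) := Set (CSentence S × ℝ)

/-- `M` satisfies the theory `T` (all its closed conditions). -/
def CStructure.SatT {S : CSig} (M : CStructure S) (T : CTheory S) : Prop :=
  ∀ c ∈ T, M.sval c.1 ≤ c.2

/-- The closed condition `φ ≤ ε` follows from `T`. -/
def Entails {S : CSig} (T : CTheory S) (c : CSentence S × ℝ) : Prop :=
  ∀ M : CStructure S, M.SatT T → M.sval c.1 ≤ c.2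

/-- The open condition `φ < ε` follows from `T`. -/
def EntailsOpen {S : CSig} (T : CTheory S) (c : CSentence S × ℝ) : Prop :=
  ∀ M : CStructure S, M.SatT T → M.sval c.1 < c.2

/-- `T` is a theory in the official sense: consistent and closed under entailment. -/
def IsTheory {S : CSig} (T : CTheory S) : Prop :=
  (∃ M : CStructure S, M.SatT T) ∧ ∀ c, Entails T c → c ∈ T

/-- `T` is universal: axiomatizable by closed conditions `sup_x̄ φ(x̄) = 0` with `φ`
quantifier-free (i.e. by conditions `ψ = 0` for Π₁ sentences `ψ`). -/
def IsUniversalTheory {S : CSig} (T : CTheory S) : Prop :=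
  ∃ A : Set (CSentence S), (∀ ψ ∈ A, IsPiN S 1 ψ) ∧
    ∀ M : CStructure S, (M.SatT T ↔ ∀ ψ ∈ A, M.sval ψ = 0)

/-- `T` is inductive: axiomatizable by open conditions `sup_x̄ inf_ȳ φ(x̄,ȳ) < ε` with `φ`
quantifier-free (i.e. by open conditions on Π₂ sentences). -/
def IsInductiveTheory {S : CSig} (T : CTheory S) : Prop :=
  ∃ A : Set (CSentence S × ℝ), (∀ c ∈ A, IsPiN S 2 c.1 ∧ 0 < c.2) ∧
    ∀ M : CStructure S, (M.SatT T ↔ ∀ c ∈ A, M.sval c.1 < c.2)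

/-- An embedding of continuous structures: an isometric map preserving all predicates. -/
structure CEmbedding {S : CSig} (M N : CStructure S) where
  toFun : M.Carrier → N.Carrier
  isometry : ∀ x y, dist (toFun x) (toFun y) = dist x y
  map_rel : ∀ i (v : Fin (S.arity i) → M.Carrier), N.rel i (toFun ∘ v) = M.rel i v

/-- An embedding is elementary if it preserves the values of all formulas. -/
def CEmbedding.Elementary {S : CSig} {M N : CStructure S} (f : CEmbedding M N) : Prop :=
  ∀ (n : ℕ) (φ : CFormula S n) (v : Fin n → M.Carrier),
    N.eval n φ (f.toFun ∘ v) = M.eval n φ v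

/-- `T` is model complete: every embedding between models of `T` is elementary. -/
def IsModelComplete {S : CSig} (T : CTheory S) : Prop :=
  ∀ M N : CStructure S, M.SatT T → N.SatT T → ∀ f : CEmbedding M N, f.Elementary

/-- `M` is an existentially closed model of `T`. -/
def IsEC {S : CSig} (T : CTheory S) (M : CStructure S) : Prop :=
  M.SatT T ∧ ∀ N : CStructure S, N.SatT T → ∀ f : CEmbedding M N,
    ∀ (n : ℕ) (φ : CFormula S (n + 1)), IsQF φ → ∀ b : Fin n → M.Carrier,
      N.eval n (CFormula.inf φ) (f.toFun ∘ b) = M.eval n (CFormula.inf φ) b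

/-- `T'` is the model companion of `T`: the models of `T'` are exactly the
existentially closed models of `T`. -/
def IsModelCompanion {S : CSig} (T T' : CTheory S) : Prop :=
  ∀ M : CStructure S, (M.SatT T' ↔ IsEC T M)

/-- `T'` is ℵ₀-categorical: any two separable models of `T'` are isomorphic. -/
def Aleph0Categorical {S : CSig} (T' : CTheory S) : Prop :=
  ∀ M N : CStructure S, M.SatT T' → N.SatT T' →
    TopologicalSpace.SeparableSpace M.Carrier → TopologicalSpace.SeparableSpace N.Carrier →
    ∃ f : CEmbedding M N, Function.Surjective f.toFun

/-! ### The Polish space `𝔖` of codes of separable structures -/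

/-- A point of `𝔖`: a separable continuous `L`-structure presented on a distinguished
countable dense subset indexed by `ℕ` — i.e. the metric and all predicate values on `ℕ`,
subject to the metric axioms and the uniform-continuity moduli. The actual structure is
the completion; since all predicates and the quantifiers are continuous, all the
first-order data is determined by this code. -/
structure SCode (S : CSig) where
  dd : ℕ → ℕ → ℝ
  R : ∀ i, (Fin (S.arity i) → ℕ) → ℝ
  dd_nonneg : ∀ i j, 0 ≤ dd i j
  dd_le_one : ∀ i j, dd i j ≤ 1
  dd_self : ∀ i, dd i i = 0
  dd_pos : ∀ i j, i ≠ j → 0 < dd i j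
  dd_symm : ∀ i j, dd i j = dd j i
  dd_triangle : ∀ i j k, dd i k ≤ dd i j + dd j k
  R_nonneg : ∀ i v, 0 ≤ R i v
  R_le_one : ∀ i v, R i v ≤ 1
  R_uc : ∀ i (ε : ℝ), 0 < ε → ∀ v w,
    (∀ j, dd (v j) (w j) < S.modulus i ε) → |R i v - R i w| ≤ ε

/-- Value of a formula on a code, under an assignment of variables to points of the
distinguished dense subset; quantifiers range over the dense subset (equivalently,
by uniform continuity, over the completion). -/
noncomputable def SCode.eval {S : CSig} (x : SCode S) :
    ∀ (n : ℕ), CFormula S n → (Fin n → ℕ) → ℝ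
  | _, .dst a b, v => x.dd (v a) (v b)
  | _, .rel i ts, v => x.R i fun j => v (ts j)
  | _, .const q, _ => clampQ q
  | n, .fmin φ ψ, v => min (x.eval n φ v) (x.eval n ψ v)
  | n, .fmax φ ψ, v => max (x.eval n φ v) (x.eval n ψ v)
  | n, .neg φ, v => 1 - x.eval n φ v
  | n, .addT φ ψ, v => min 1 (x.eval n φ v + x.eval n ψ v)
  | n, .subT φ ψ, v => max 0 (x.eval n φ v - x.eval n ψ v)
  | n, .absd φ ψ, v => |x.eval n φ v - x.eval n ψ v|
  | n, .scale q φ, v => clampQ q * x.eval n φ v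
  | n, .inf φ, v => ⨅ k : ℕ, x.eval (n + 1) φ (Fin.snoc v k)
  | n, .sup φ, v => ⨆ k : ℕ, x.eval (n + 1) φ (Fin.snoc v k)

/-- The value of a sentence on a code. -/
noncomputable def SCode.sval {S : CSig} (x : SCode S) (φ : CSentence S) : ℝ :=
  x.eval 0 φ (fun i => i.elim0)

/-- The structure coded by `x` satisfies the theory `T`. -/
def SCode.SatT {S : CSig} (x : SCode S) (T : CTheory S) : Prop :=
  ∀ c ∈ T, x.sval c.1 ≤ c.2

/-- The basic open set `U_{φ(ā),ε} = {x ∈ 𝔖 : φ^x(ā) < ε}`. -/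
def basicSet {S : CSig} (n : ℕ) (φ : CFormula S n) (a : Fin n → ℕ) (ε : ℝ) :
    Set (SCode S) :=
  {x | x.eval n φ a < ε}

/-- The topology on `𝔖` generated by the basic open sets `U_{φ(ā),ε}` for `φ`
quantifier-free, `ā` a tuple from the distinguished dense subset and `ε > 0`. -/
instance SCode.topologicalSpace (S : CSig) : TopologicalSpace (SCode S) :=
  TopologicalSpace.generateFrom
    {U | ∃ (n : ℕ) (φ : CFormula S n) (a : Fin n → ℕ) (ε : ℝ),
      IsQF φ ∧ 0 < ε ∧ U = basicSet n φ a ε}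

/-- `x` codes the structure `M`: the distinguished countable dense subset maps to a dense
sequence in `M` realizing exactly the metric and predicate values recorded in `x`
(i.e. `M` is "the completion" of `x`). For a fixed `M`, `{x ∈ 𝔖 : Codes x M}` is
precisely the isomorphism class of `M` in `𝔖`. -/
def Codes {S : CSig} (x : SCode S) (M : CStructure S) : Prop :=
  ∃ u : ℕ → M.Carrier, DenseRange u ∧ (∀ i j, dist (u i) (u j) = x.dd i j) ∧
    ∀ i (v : Fin (S.arity i) → ℕ), M.rel i (u ∘ v) = x.R i v

/-! ### Helper material -/

/-- Numerical coding of formulas. -/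
noncomputable def encF {S : CSig} : ∀ {n : ℕ}, CFormula S n → ℕ
  | _, .dst a b => Nat.pair 0 (Nat.pair a b)
  | _, .rel i ts => Nat.pair 1 (Nat.pair i (Encodable.encode ts))
  | _, .const q => Nat.pair 2 (Encodable.encode q)
  | _, .fmin φ ψ => Nat.pair 3 (Nat.pair (encF φ) (encF ψ))
  | _, .fmax φ ψ => Nat.pair 4 (Nat.pair (encF φ) (encF ψ))
  | _, .neg φ => Nat.pair 5 (encF φ)
  | _, .addT φ ψ => Nat.pair 6 (Nat.pair (encF φ) (encF ψ))
  | _, .subT φ ψ => Nat.pair 7 (Nat.pair (encF φ) (encF ψ))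
  | _, .absd φ ψ => Nat.pair 8 (Nat.pair (encF φ) (encF ψ))
  | _, .scale q φ => Nat.pair 9 (Nat.pair (Encodable.encode q) (encF φ))
  | _, .inf φ => Nat.pair 10 (encF φ)
  | _, .sup φ => Nat.pair 11 (encF φ)

theorem encF_inj {S : CSig} {n : ℕ} (φ : CFormula S n) :
    ∀ ψ : CFormula S n, encF φ = encF ψ → φ = ψ := by
  induction φ with
  | dst a b => intro ψ; cases ψ <;> simp [encF, Nat.pair_eq_pair, Fin.ext_iff]
  | rel i ts =>
    intro ψ
    cases ψ with
    | rel j ts' =>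
      intro h
      simp only [encF, Nat.pair_eq_pair] at h
      obtain ⟨-, h1, h2⟩ := h
      subst h1
      rw [Encodable.encode_injective h2]
    | _ => simp [encF, Nat.pair_eq_pair]
  | const q => intro ψ; cases ψ <;> simp [encF, Nat.pair_eq_pair]
  | fmin a b iha ihb =>
    intro ψ; cases ψ <;> simp [encF, Nat.pair_eq_pair]
    exact fun h1 h2 => ⟨iha _ h1, ihb _ h2⟩
  | fmax a b iha ihb =>
    intro ψ; cases ψ <;> simp [encF, Nat.pair_eq_pair]
    exact fun h1 h2 => ⟨iha _ h1, ihb _ h2⟩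
  | neg a iha =>
    intro ψ; cases ψ <;> simp [encF, Nat.pair_eq_pair]
    exact iha _
  | addT a b iha ihb =>
    intro ψ; cases ψ <;> simp [encF, Nat.pair_eq_pair]
    exact fun h1 h2 => ⟨iha _ h1, ihb _ h2⟩
  | subT a b iha ihb =>
    intro ψ; cases ψ <;> simp [encF, Nat.pair_eq_pair]
    exact fun h1 h2 => ⟨iha _ h1, ihb _ h2⟩
  | absd a b iha ihb =>
    intro ψ; cases ψ <;> simp [encF, Nat.pair_eq_pair]
    exact fun h1 h2 => ⟨iha _ h1, ihb _ h2⟩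
  | scale q b ihb =>
    intro ψ; cases ψ <;> simp [encF, Nat.pair_eq_pair]
    exact fun h1 h2 => ⟨h1, ihb _ h2⟩
  | inf a iha =>
    intro ψ; cases ψ <;> simp [encF, Nat.pair_eq_pair]
    exact iha _
  | sup a iha =>
    intro ψ; cases ψ <;> simp [encF, Nat.pair_eq_pair]
    exact iha _

theorem countable_CFormula (S : CSig) (n : ℕ) : Countable (CFormula S n) :=
  Function.Injective.countable (f := encF) (fun φ ψ h => encF_inj φ ψ h)

theorem clampQ_nonneg (q : ℚ) : 0 ≤ clampQ q := le_max_left _ _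

theorem clampQ_le_one (q : ℚ) : clampQ q ≤ 1 := max_le zero_le_one (min_le_left _ _)

theorem CStructure.eval_mem {S : CSig} (M : CStructure S) {n : ℕ} (φ : CFormula S n) :
    ∀ v : Fin n → M.Carrier, 0 ≤ M.eval n φ v ∧ M.eval n φ v ≤ 1 := by
  induction φ with
  | dst a b => intro v; exact ⟨dist_nonneg, M.bounded _ _⟩
  | rel i ts => intro v; exact ⟨M.rel_nonneg _ _, M.rel_le_one _ _⟩
  | const q => intro v; exact ⟨clampQ_nonneg q, clampQ_le_one q⟩
  | fmin a b iha ihb =>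
    intro v; exact ⟨le_min (iha v).1 (ihb v).1, (min_le_left _ _).trans (iha v).2⟩
  | fmax a b iha ihb =>
    intro v; exact ⟨(iha v).1.trans (le_max_left _ _), max_le (iha v).2 (ihb v).2⟩
  | neg a iha =>
    intro v; have := iha v; simp only [CStructure.eval]; constructor <;> linarith
  | addT a b iha ihb =>
    intro v
    exact ⟨le_min zero_le_one (add_nonneg (iha v).1 (ihb v).1), min_le_left _ _⟩
  | subT a b iha ihb =>
    intro v; have h1 := iha v; have h2 := ihb v
    exact ⟨le_max_left _ _, max_le zero_le_one (by linarith)⟩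
  | absd a b iha ihb =>
    intro v; have h1 := iha v; have h2 := ihb v
    exact ⟨abs_nonneg _, abs_le.2 ⟨by linarith, by linarith⟩⟩
  | scale q b ihb =>
    intro v
    exact ⟨mul_nonneg (clampQ_nonneg q) (ihb v).1,
      mul_le_one₀ (clampQ_le_one q) (ihb v).1 (ihb v).2⟩
  | inf a iha =>
    intro v
    have hb : BddBelow (Set.range fun x : M.Carrier => M.eval _ a (Fin.snoc v x)) :=
      ⟨0, by rintro _ ⟨x, rfl⟩; exact (iha _).1⟩
    exact ⟨le_ciInf fun x => (iha _).1, (ciInf_le hb (Classical.arbitrary _)).trans (iha _).2⟩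
  | sup a iha =>
    intro v
    have hb : BddAbove (Set.range fun x : M.Carrier => M.eval _ a (Fin.snoc v x)) :=
      ⟨1, by rintro _ ⟨x, rfl⟩; exact (iha _).2⟩
    exact ⟨(iha _).1.trans (le_ciSup hb (Classical.arbitrary _)), ciSup_le fun x => (iha _).2⟩

theorem CStructure.bddBelow_eval {S : CSig} (M : CStructure S) {n : ℕ} {ι : Type*}
    (φ : CFormula S n) (g : ι → Fin n → M.Carrier) :
    BddBelow (Set.range fun x : ι => M.eval n φ (g x)) :=
  ⟨0, by rintro _ ⟨x, rfl⟩; exact (M.eval_mem φ _).1⟩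

theorem CStructure.bddAbove_eval {S : CSig} (M : CStructure S) {n : ℕ} {ι : Type*}
    (φ : CFormula S n) (g : ι → Fin n → M.Carrier) :
    BddAbove (Set.range fun x : ι => M.eval n φ (g x)) :=
  ⟨1, by rintro _ ⟨x, rfl⟩; exact (M.eval_mem φ _).2⟩

/-- Uniform continuity of all formulas. -/
theorem CStructure.eval_uc {S : CSig} (M : CStructure S) {n : ℕ} (φ : CFormula S n) :
    ∀ ε : ℝ, 0 < ε → ∃ δ : ℝ, 0 < δ ∧ ∀ v w : Fin n → M.Carrier,
      (∀ j, dist (v j) (w j) < δ) → |M.eval n φ v - M.eval n φ w| ≤ ε := by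
  have key : ∀ {n : ℕ} (a b : CFormula S n),
      (∀ ε : ℝ, 0 < ε → ∃ δ : ℝ, 0 < δ ∧ ∀ v w : Fin n → M.Carrier,
        (∀ j, dist (v j) (w j) < δ) → |M.eval n a v - M.eval n a w| ≤ ε) →
      (∀ ε : ℝ, 0 < ε → ∃ δ : ℝ, 0 < δ ∧ ∀ v w : Fin n → M.Carrier,
        (∀ j, dist (v j) (w j) < δ) → |M.eval n b v - M.eval n b w| ≤ ε) →
      (∀ ε : ℝ, 0 < ε → ∃ δ : ℝ, 0 < δ ∧ ∀ v w : Fin n → M.Carrier,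
        (∀ j, dist (v j) (w j) < δ) → |M.eval n a v - M.eval n a w| ≤ ε / 2 ∧
          |M.eval n b v - M.eval n b w| ≤ ε / 2) := by
    intro n a b ha hb ε hε
    obtain ⟨δ1, h1, h1'⟩ := ha (ε / 2) (by linarith)
    obtain ⟨δ2, h2, h2'⟩ := hb (ε / 2) (by linarith)
    exact ⟨min δ1 δ2, lt_min h1 h2, fun v w h =>
      ⟨h1' v w fun j => (h j).trans_le (min_le_left _ _),
       h2' v w fun j => (h j).trans_le (min_le_right _ _)⟩⟩
  have lmin : ∀ a b c d e : ℝ, |a - c| ≤ e → |b - d| ≤ e → |min a b - min c d| ≤ e := by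
    intro a b c d e h1 h2
    exact (abs_min_sub_min_le_max a b c d).trans (max_le h1 h2)
  have lmax : ∀ a b c d e : ℝ, |a - c| ≤ e → |b - d| ≤ e → |max a b - max c d| ≤ e := by
    intro a b c d e h1 h2
    exact (abs_max_sub_max_le_max a b c d).trans (max_le h1 h2)
  induction φ with
  | dst a b =>
    intro ε hε
    refine ⟨ε / 2, by linarith, fun v w h => ?_⟩
    have h1 := h a
    have h2 := h b
    simp only [CStructure.eval]
    have := dist_dist_dist_le (v a) (v b) (w a) (w b)
    rw [Real.dist_eq] at this
    linarith
  | rel i ts =>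
    intro ε hε
    exact ⟨S.modulus i ε, S.modulus_pos i ε hε, fun v w h => M.rel_uc i ε hε _ _ fun j => h _⟩
  | const q => intro ε hε; exact ⟨1, one_pos, fun v w h => by simp [CStructure.eval, hε.le]⟩
  | fmin a b iha ihb =>
    intro ε hε
    obtain ⟨δ, hδ, h⟩ := key a b iha ihb ε hε
    exact ⟨δ, hδ, fun v w hvw => lmin _ _ _ _ _ ((h v w hvw).1.trans (by linarith))
      ((h v w hvw).2.trans (by linarith))⟩
  | fmax a b iha ihb =>
    intro ε hε
    obtain ⟨δ, hδ, h⟩ := key a b iha ihb ε hε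
    exact ⟨δ, hδ, fun v w hvw => lmax _ _ _ _ _ ((h v w hvw).1.trans (by linarith))
      ((h v w hvw).2.trans (by linarith))⟩
  | neg a iha =>
    intro ε hε
    obtain ⟨δ, hδ, h⟩ := iha ε hε
    refine ⟨δ, hδ, fun v w hvw => ?_⟩
    have := h v w hvw
    simp only [CStructure.eval]
    rw [abs_le] at *
    constructor <;> linarith
  | addT a b iha ihb =>
    intro ε hε
    obtain ⟨δ, hδ, h⟩ := key a b iha ihb ε hε
    refine ⟨δ, hδ, fun v w hvw => lmin _ _ _ _ _ (by simpa using hε.le) ?_⟩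
    obtain ⟨h1, h2⟩ := h v w hvw
    rw [abs_le] at *
    constructor <;> linarith
  | subT a b iha ihb =>
    intro ε hε
    obtain ⟨δ, hδ, h⟩ := key a b iha ihb ε hε
    refine ⟨δ, hδ, fun v w hvw => lmax _ _ _ _ _ (by simpa using hε.le) ?_⟩
    obtain ⟨h1, h2⟩ := h v w hvw
    rw [abs_le] at *
    constructor <;> linarith
  | absd a b iha ihb =>
    intro ε hε
    obtain ⟨δ, hδ, h⟩ := key a b iha ihb ε hε
    refine ⟨δ, hδ, fun v w hvw => (abs_abs_sub_abs_le _ _).trans ?_⟩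
    obtain ⟨h1, h2⟩ := h v w hvw
    rw [abs_le] at *
    constructor <;> linarith
  | scale q b ihb =>
    intro ε hε
    obtain ⟨δ, hδ, h⟩ := ihb ε hε
    refine ⟨δ, hδ, fun v w hvw => ?_⟩
    have := h v w hvw
    simp only [CStructure.eval]
    rw [← mul_sub, abs_mul, abs_of_nonneg (clampQ_nonneg q)]
    exact (mul_le_of_le_one_left (abs_nonneg _) (clampQ_le_one q)).trans this
  | inf a iha =>
    intro ε hε
    obtain ⟨δ, hδ, h⟩ := iha ε hε
    refine ⟨δ, hδ, ?_⟩
    have one : ∀ v w, (∀ j, dist (v j) (w j) < δ) →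
        M.eval _ (.inf a) v ≤ M.eval _ (.inf a) w + ε := by
      intro v w hvw
      simp only [CStructure.eval]
      rw [← sub_le_iff_le_add]
      refine le_ciInf fun x => ?_
      have h1 := ciInf_le (M.bddBelow_eval a fun x => Fin.snoc v x) x
      have h2 := h (Fin.snoc v x) (Fin.snoc w x) (fun j => by
        refine Fin.lastCases ?_ (fun j => ?_) j
        · simpa using hδ
        · simpa using hvw j)
      rw [abs_le] at h2
      linarith
    intro v w hvw
    have h1 := one v w hvw
    have h2 := one w v (fun j => by rw [dist_comm]; exact hvw j)
    rw [abs_le]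
    constructor <;> linarith
  | sup a iha =>
    intro ε hε
    obtain ⟨δ, hδ, h⟩ := iha ε hε
    refine ⟨δ, hδ, ?_⟩
    have one : ∀ v w, (∀ j, dist (v j) (w j) < δ) →
        M.eval _ (.sup a) v ≤ M.eval _ (.sup a) w + ε := by
      intro v w hvw
      simp only [CStructure.eval]
      refine ciSup_le fun x => ?_
      have h1 := le_ciSup (M.bddAbove_eval a fun x => Fin.snoc w x) x
      have h2 := h (Fin.snoc v x) (Fin.snoc w x) (fun j => by
        refine Fin.lastCases ?_ (fun j => ?_) j
        · simpa using hδ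
        · simpa using hvw j)
      rw [abs_le] at h2
      linarith
    intro v w hvw
    have h1 := one v w hvw
    have h2 := one w v (fun j => by rw [dist_comm]; exact hvw j)
    rw [abs_le]
    constructor <;> linarith

theorem CStructure.eval_continuous {S : CSig} (M : CStructure S) {n : ℕ} (φ : CFormula S n) :
    Continuous (M.eval n φ) := by
  rw [Metric.continuous_iff]
  intro b ε hε
  obtain ⟨δ, hδ, h⟩ := M.eval_uc φ (ε / 2) (by linarith)
  refine ⟨δ, hδ, fun a hab => ?_⟩
  rw [Real.dist_eq]
  have := h a b (fun j => (dist_le_pi_dist a b j).trans_lt hab)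
  linarith

theorem continuous_snoc_last {X : Type*} [TopologicalSpace X] {n : ℕ} (v : Fin n → X) :
    Continuous (fun x : X => (Fin.snoc v x : Fin (n + 1) → X)) := by
  refine continuous_pi fun j => ?_
  refine Fin.lastCases ?_ (fun j => ?_) j
  · simpa using continuous_id'
  · simpa using continuous_const

theorem comp_snoc' {X Y : Type*} {n : ℕ} (u : X → Y) (v : Fin n → X) (x : X) :
    (u ∘ (Fin.snoc v x : Fin (n + 1) → X)) = Fin.snoc (u ∘ v) (u x) := by
  funext j
  refine Fin.lastCases ?_ (fun j => ?_) j <;> simp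

/-- A dense sequence computes infima. -/
theorem CStructure.inf_dense {S : CSig} (M : CStructure S) {n : ℕ} (φ : CFormula S (n + 1))
    {I : Type} [Nonempty I] (u : I → M.Carrier) (hu : DenseRange u) (v : Fin n → M.Carrier) :
    (⨅ x : M.Carrier, M.eval (n + 1) φ (Fin.snoc v x)) =
      ⨅ i : I, M.eval (n + 1) φ (Fin.snoc v (u i)) := by
  apply le_antisymm
  · exact le_ciInf fun i => ciInf_le (M.bddBelow_eval φ fun x => Fin.snoc v x) (u i)
  · refine le_ciInf fun x => ?_
    refine hu.induction_on (p := fun x => (⨅ i : I, M.eval (n + 1) φ (Fin.snoc v (u i))) ≤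
      M.eval (n + 1) φ (Fin.snoc v x)) x ?_ ?_
    · exact isClosed_le continuous_const ((M.eval_continuous φ).comp (continuous_snoc_last v))
    · intro i
      exact ciInf_le (M.bddBelow_eval φ fun i => Fin.snoc v (u i)) i

theorem CStructure.sup_dense {S : CSig} (M : CStructure S) {n : ℕ} (φ : CFormula S (n + 1))
    {I : Type} [Nonempty I] (u : I → M.Carrier) (hu : DenseRange u) (v : Fin n → M.Carrier) :
    (⨆ x : M.Carrier, M.eval (n + 1) φ (Fin.snoc v x)) =
      ⨆ i : I, M.eval (n + 1) φ (Fin.snoc v (u i)) := by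
  apply le_antisymm
  · refine ciSup_le fun x => ?_
    refine hu.induction_on (p := fun x => M.eval (n + 1) φ (Fin.snoc v x) ≤
      (⨆ i : I, M.eval (n + 1) φ (Fin.snoc v (u i)))) x ?_ ?_
    · exact isClosed_le ((M.eval_continuous φ).comp (continuous_snoc_last v)) continuous_const
    · intro i
      exact le_ciSup (M.bddAbove_eval φ fun i => Fin.snoc v (u i)) i
  · exact ciSup_le fun i => le_ciSup (M.bddAbove_eval φ fun x => Fin.snoc v x) (u i)

theorem SCode.eval_eq {S : CSig} (x : SCode S) (M : CStructure S) (u : ℕ → M.Carrier)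
    (hu : DenseRange u) (hd : ∀ i j, dist (u i) (u j) = x.dd i j)
    (hR : ∀ i (v : Fin (S.arity i) → ℕ), M.rel i (u ∘ v) = x.R i v)
    {n : ℕ} (φ : CFormula S n) : ∀ a : Fin n → ℕ, x.eval n φ a = M.eval n φ (u ∘ a) := by
  induction φ with
  | dst a b => intro v; exact (hd _ _).symm
  | rel i ts => intro v; exact (hR _ _).symm
  | const q => intro v; rfl
  | inf a iha =>
    intro v
    simp only [CStructure.eval, SCode.eval]
    rw [M.inf_dense a u hu]
    exact iInf_congr fun i => by rw [iha, comp_snoc']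
  | sup a iha =>
    intro v
    simp only [CStructure.eval, SCode.eval]
    rw [M.sup_dense a u hu]
    exact iSup_congr fun i => by rw [iha, comp_snoc']
  | neg a iha => intro v; simp only [CStructure.eval, SCode.eval, iha]
  | scale q a iha => intro v; simp only [CStructure.eval, SCode.eval, iha]
  | _ a b iha ihb => intro v; simp only [CStructure.eval, SCode.eval, iha, ihb]

theorem SCode.satT_iff {S : CSig} (x : SCode S) (M : CStructure S) (h : Codes x M)
    (T : CTheory S) : x.SatT T ↔ M.SatT T := by
  obtain ⟨u, hu, hd, hR⟩ := h
  have : ∀ φ, x.sval φ = M.sval φ := by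
    intro φ
    rw [SCode.sval, CStructure.sval, x.eval_eq M u hu hd hR]
    congr 1
    funext i
    exact i.elim0
  simp only [SCode.SatT, CStructure.SatT, this]

/-- Quantifier-free formulas depend only on the diagram of the tuple. -/
theorem qf_congr {S : CSig} (M N : CStructure S) {n : ℕ} {φ : CFormula S n} (hφ : IsQF φ)
    (v : Fin n → M.Carrier) (w : Fin n → N.Carrier)
    (hd : ∀ i j, dist (v i) (v j) = dist (w i) (w j))
    (hR : ∀ i (ts : Fin (S.arity i) → Fin n), M.rel i (v ∘ ts) = N.rel i (w ∘ ts)) :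
    M.eval n φ v = N.eval n φ w := by
  induction hφ with
  | dst a b => exact hd _ _
  | rel i ts => exact hR _ _
  | const q => rfl
  | neg _ iha => simp only [CStructure.eval, iha]
  | scale q _ iha => simp only [CStructure.eval, iha]
  | _ _ _ iha ihb => simp only [CStructure.eval, iha, ihb]

theorem qf_congr_code {S : CSig} (x y : SCode S) {n : ℕ} {φ : CFormula S n} (hφ : IsQF φ)
    (v : Fin n → ℕ) (hd : ∀ i j, x.dd (v i) (v j) = y.dd (v i) (v j))
    (hR : ∀ i (ts : Fin (S.arity i) → Fin n), x.R i (v ∘ ts) = y.R i (v ∘ ts)) :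
    x.eval n φ v = y.eval n φ v := by
  induction hφ with
  | dst a b => exact hd _ _
  | rel i ts => exact hR _ _
  | const q => rfl
  | neg _ iha => simp only [SCode.eval, iha]
  | scale q _ iha => simp only [SCode.eval, iha]
  | _ _ _ iha ihb => simp only [SCode.eval, iha, ihb]

/-- Open sets of codes are determined by finitely many points. -/
theorem open_finite_support {S : CSig} (U : Set (SCode S)) (hU : IsOpen U) :
    ∀ x ∈ U, ∃ K : ℕ, ∀ y : SCode S, (∀ i j, i < K → j < K → x.dd i j = y.dd i j) →
      (∀ i (v : Fin (S.arity i) → ℕ), (∀ j, v j < K) → x.R i v = y.R i v) → y ∈ U := by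
  induction hU with
  | basic s hs =>
    obtain ⟨n, φ, a, ε, hφ, hε, rfl⟩ := hs
    intro x hx
    obtain ⟨K, hK⟩ : ∃ K, ∀ j, a j < K :=
      ⟨Finset.univ.sup a + 1, fun j => Nat.lt_succ_of_le (Finset.le_sup (Finset.mem_univ j))⟩
    refine ⟨K, fun y hd hR => ?_⟩
    have : x.eval n φ a = y.eval n φ a :=
      qf_congr_code x y hφ a (fun i j => hd _ _ (hK i) (hK j)) (fun i ts => hR _ _ fun j => hK _)
    change y.eval n φ a < ε
    rw [← this]
    exact hx
  | univ => intro x _; exact ⟨0, fun _ _ _ => trivial⟩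
  | inter s t _ _ ihs iht =>
    intro x hx
    obtain ⟨K1, h1⟩ := ihs x hx.1
    obtain ⟨K2, h2⟩ := iht x hx.2
    refine ⟨max K1 K2, fun y hd hR => ⟨h1 y ?_ ?_, h2 y ?_ ?_⟩⟩
    · exact fun i j hi hj => hd i j (lt_max_of_lt_left hi) (lt_max_of_lt_left hj)
    · exact fun i v hv => hR i v fun j => lt_max_of_lt_left (hv j)
    · exact fun i j hi hj => hd i j (lt_max_of_lt_right hi) (lt_max_of_lt_right hj)
    · exact fun i v hv => hR i v fun j => lt_max_of_lt_right (hv j)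
  | sUnion C _ ih =>
    intro x hx
    obtain ⟨s, hs, hxs⟩ := hx
    obtain ⟨K, h⟩ := ih s hs x hxs
    exact ⟨K, fun y hd hR => ⟨s, hs, h y hd hR⟩⟩

/-- A pre-code: a pseudometric diagram on an index type. -/
structure PreCode (S : CSig) (I : Type) where
  dd : I → I → ℝ
  R : ∀ i, (Fin (S.arity i) → I) → ℝ
  dd_le_one : ∀ i j, dd i j ≤ 1
  dd_self : ∀ i, dd i i = 0
  dd_symm : ∀ i j, dd i j = dd j i
  dd_triangle : ∀ i j k, dd i k ≤ dd i j + dd j k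
  R_nonneg : ∀ i v, 0 ≤ R i v
  R_le_one : ∀ i v, R i v ≤ 1
  R_uc : ∀ i (ε : ℝ), 0 < ε → ∀ v w,
    (∀ j, dd (v j) (w j) < S.modulus i ε) → |R i v - R i w| ≤ ε

theorem exists_extension {I : Type} [PseudoMetricSpace I] {k : ℕ} (f : (Fin k → I) → ℝ)
    (m : ℝ → ℝ) (hm : ∀ ε, 0 < ε → 0 < m ε)
    (hf : ∀ ε : ℝ, 0 < ε → ∀ v w, (∀ j, dist (v j) (w j) < m ε) → |f v - f w| ≤ ε) :
    ∃ g : (Fin k → UniformSpace.Completion I) → ℝ, Continuous g ∧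
      ∀ v : Fin k → I, g (fun j => (v j : UniformSpace.Completion I)) = f v := by
  let e : (Fin k → I) → (Fin k → UniformSpace.Completion I) :=
    Pi.map fun _ i => (i : UniformSpace.Completion I)
  have he : Isometry e := Isometry.piMap _ fun _ => UniformSpace.Completion.coe_isometry
  have hd : DenseRange e := DenseRange.piMap fun _ => UniformSpace.Completion.denseRange_coe
  have hfu : UniformContinuous f := by
    rw [Metric.uniformContinuous_iff]
    intro ε hε
    refine ⟨m (ε / 2), hm _ (by linarith), fun {v w} h => ?_⟩
    rw [Real.dist_eq]
    have := hf (ε / 2) (by linarith) v w (fun j => (dist_le_pi_dist v w j).trans_lt h)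
    linarith
  have hu := he.isUniformInducing
  refine ⟨(hu.isDenseInducing hd).extend f, ?_, ?_⟩
  · exact (uniformContinuous_uniformly_extend hu hd hfu).continuous
  · intro v
    exact uniformly_extend_of_ind hu hd hfu v

theorem PreCode.exists_completion {S : CSig} {I : Type} [Nonempty I] (x : PreCode S I) :
    ∃ (N : CStructure S) (u : I → N.Carrier), DenseRange u ∧
      (∀ i j, dist (u i) (u j) = x.dd i j) ∧
      ∀ i (v : Fin (S.arity i) → I), N.rel i (u ∘ v) = x.R i v := by
  let pm : PseudoMetricSpace I :=
    { dist := x.dd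
      dist_self := x.dd_self
      dist_comm := x.dd_symm
      dist_triangle := x.dd_triangle }
  have hdist : ∀ i j : I, dist i j = x.dd i j := fun _ _ => rfl
  have hext := fun i => exists_extension (x.R i) (S.modulus i) (S.modulus_pos i)
    (fun ε hε v w h => x.R_uc i ε hε v w h)
  choose g hgc hg using hext
  have hdense : ∀ k : ℕ, DenseRange (fun (v : Fin k → I) (j : Fin k) =>
      (v j : UniformSpace.Completion I)) := fun k =>
    DenseRange.piMap (fun (_ : Fin k) => UniformSpace.Completion.denseRange_coe)
  refine ⟨{ Carrier := UniformSpace.Completion I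
            metric := inferInstance
            nonempty := ⟨((Classical.arbitrary I : I) : UniformSpace.Completion I)⟩
            complete := inferInstance
            bounded := ?_
            rel := g
            rel_nonneg := ?_
            rel_le_one := ?_
            rel_uc := ?_ }, fun i => (i : UniformSpace.Completion I), ?_, ?_, ?_⟩
  · intro a b
    refine UniformSpace.Completion.induction_on₂ a b ?_ ?_
    · exact isClosed_le continuous_dist continuous_const
    · intro a b
      rw [UniformSpace.Completion.dist_eq]
      exact x.dd_le_one a b
  · intro i v
    refine (hdense _).induction_on (p := fun v => 0 ≤ g i v) v ?_ ?_
    · exact isClosed_le continuous_const (hgc i)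
    · intro v; rw [hg]; exact x.R_nonneg i v
  · intro i v
    refine (hdense _).induction_on (p := fun v => g i v ≤ 1) v ?_ ?_
    · exact isClosed_le (hgc i) continuous_const
    · intro v; rw [hg]; exact x.R_le_one i v
  · intro i ε hε v w h
    -- approximate the pair by a pair of tuples from the dense set
    let O : Set ((Fin (S.arity i) → UniformSpace.Completion I) ×
        (Fin (S.arity i) → UniformSpace.Completion I)) :=
      {p | ∀ j, dist (p.1 j) (p.2 j) < S.modulus i ε}
    have hO : IsOpen O := by
      have : O = ⋂ j, {p | dist (p.1 j) (p.2 j) < S.modulus i ε} := by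
        ext p; simp [O]
      rw [this]
      refine isOpen_iInter_of_finite fun j => isOpen_lt ?_ continuous_const
      fun_prop
    have hD := (hdense (S.arity i)).prodMap (hdense (S.arity i))
    have hC : IsClosed {p : (Fin (S.arity i) → UniformSpace.Completion I) ×
        (Fin (S.arity i) → UniformSpace.Completion I) | |g i p.1 - g i p.2| ≤ ε} := by
      refine isClosed_le ?_ continuous_const
      exact (((hgc i).comp continuous_fst).sub ((hgc i).comp continuous_snd)).abs
    by_contra hcon
    obtain ⟨q, hq⟩ := hD.exists_mem_open (hO.inter hC.isOpen_compl) ⟨(v, w), h, hcon⟩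
    obtain ⟨hq1, hq2⟩ := hq
    apply hq2
    change |g i _ - g i _| ≤ ε
    simp only [Prod.map]
    rw [hg, hg]
    refine x.R_uc i ε hε _ _ fun j => ?_
    have := hq1 j
    simp only [Prod.map, UniformSpace.Completion.dist_eq] at this
    exact this
  · exact UniformSpace.Completion.denseRange_coe
  · intro i j
    exact UniformSpace.Completion.dist_eq i j
  · intro i v
    exact hg i v

/-- The pre-code underlying a code. -/
def SCode.toPre {S : CSig} (x : SCode S) : PreCode S ℕ where
  dd := x.dd
  R := x.R
  dd_le_one := x.dd_le_one
  dd_self := x.dd_self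
  dd_symm := x.dd_symm
  dd_triangle := x.dd_triangle
  R_nonneg := x.R_nonneg
  R_le_one := x.R_le_one
  R_uc := x.R_uc

/-- Index type for the construction. -/
abbrev Idx := ℕ ⊕ ℕ

/-- The stage at which an index becomes active. -/
def rk : Idx → ℕ
  | .inl _ => 0
  | .inr j => j + 1

/-- A stage of the construction: a model of `T` with an indexed family of points. -/
structure Stg {S : CSig} (T : CTheory S) where
  M : CStructure S
  u : Idx → M.Carrier
  sat : M.SatT T

/-- Two stages have the same diagram on the indices of rank `≤ s`. -/
def Agree {S : CSig} {T : CTheory S} (s : ℕ) (A B : Stg T) : Prop :=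
  (∀ i j, rk i ≤ s → rk j ≤ s → dist (A.u i) (A.u j) = dist (B.u i) (B.u j)) ∧
    ∀ i (v : Fin (S.arity i) → Idx), (∀ j, rk (v j) ≤ s) →
      A.M.rel i (A.u ∘ v) = B.M.rel i (B.u ∘ v)

theorem Agree.refl {S : CSig} {T : CTheory S} (s : ℕ) (A : Stg T) : Agree s A A :=
  ⟨fun _ _ _ _ => rfl, fun _ _ _ => rfl⟩

theorem Agree.trans {S : CSig} {T : CTheory S} {s : ℕ} {A B C : Stg T} (h : Agree s A B)
    (h' : Agree s B C) : Agree s A C :=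
  ⟨fun i j hi hj => (h.1 i j hi hj).trans (h'.1 i j hi hj),
    fun i v hv => (h.2 i v hv).trans (h'.2 i v hv)⟩

theorem Agree.symm {S : CSig} {T : CTheory S} {s : ℕ} {A B : Stg T} (h : Agree s A B) :
    Agree s B A :=
  ⟨fun i j hi hj => (h.1 i j hi hj).symm, fun i v hv => (h.2 i v hv).symm⟩

theorem Agree.mono {S : CSig} {T : CTheory S} {s t : ℕ} (hst : s ≤ t) {A B : Stg T}
    (h : Agree t A B) : Agree s A B :=
  ⟨fun i j hi hj => h.1 i j (hi.trans hst) (hj.trans hst),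
    fun i v hv => h.2 i v fun j => (hv j).trans hst⟩

/-- Requirements. -/
abbrev Req (S : CSig) := Σ n : ℕ, (CFormula S (n + 1) × (Fin n → Idx)) × ℕ

/-- The requirement `r` is met when passing from stage `A` to stage `B`. -/
def Met {S : CSig} {T : CTheory S} (s : ℕ) (r : Req S) (A B : Stg T) : Prop :=
  (∀ j, rk (r.2.1.2 j) ≤ s) → ∀ C : Stg T, Agree s A C →
    B.M.eval (r.1 + 1) r.2.1.1 (Fin.snoc (B.u ∘ r.2.1.2) (B.u (.inr s))) ≤
      C.M.eval r.1 (.inf r.2.1.1) (C.u ∘ r.2.1.2) + 1 / ((r.2.2 : ℝ) + 1)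

theorem exists_step {S : CSig} {T : CTheory S} (s : ℕ) (r : Req S) (A : Stg T) :
    ∃ B : Stg T, Agree s A B ∧ Met s r A B := by
  by_cases hb : ∀ j, rk (r.2.1.2 j) ≤ s
  swap
  · exact ⟨A, Agree.refl s A, fun h => absurd h hb⟩
  obtain ⟨n, ⟨φ, b⟩, k⟩ := r
  simp only at hb
  set ε : ℝ := 1 / ((k : ℝ) + 1) with hε
  have hεpos : 0 < ε := by positivity
  let V : Set ℝ := {t | ∃ C : Stg T, Agree s A C ∧ t = C.M.eval n (.inf φ) (C.u ∘ b)}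
  have hVne : V.Nonempty := ⟨_, A, Agree.refl s A, rfl⟩
  have hVb : BddBelow V := ⟨0, by
    rintro _ ⟨C, -, rfl⟩
    exact (C.M.eval_mem _ _).1⟩
  obtain ⟨t, ⟨C, hC, rfl⟩, ht⟩ := exists_lt_of_csInf_lt hVne
    (show sInf V < sInf V + ε / 2 by linarith)
  obtain ⟨c, hc⟩ := exists_lt_of_ciInf_lt
    (show (⨅ x : C.M.Carrier, C.M.eval (n + 1) φ (Fin.snoc (C.u ∘ b) x)) <
      C.M.eval n (.inf φ) (C.u ∘ b) + ε / 2 by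
        simp only [CStructure.eval]; linarith)
  have hne : ∀ i, rk i ≤ s → Function.update C.u (.inr s) c i = C.u i := by
    intro i hi
    refine Function.update_of_ne ?_ _ _
    rintro rfl
    simp [rk] at hi
  have hcomp : ∀ {m : ℕ} (v : Fin m → Idx), (∀ j, rk (v j) ≤ s) →
      Function.update C.u (.inr s) c ∘ v = C.u ∘ v := by
    intro m v hv
    funext j
    exact hne _ (hv j)
  refine ⟨⟨C.M, Function.update C.u (.inr s) c, C.sat⟩, hC.trans ⟨?_, ?_⟩, ?_⟩
  · intro i j hi hj
    simp only [hne i hi, hne j hj]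
  · intro i v hv
    simp only [hcomp v hv]
  · intro _ D hD
    simp only [hcomp b hb, Function.update_self]
    have : sInf V ≤ D.M.eval n (.inf φ) (D.u ∘ b) := csInf_le hVb ⟨D, hD, rfl⟩
    linarith

theorem exists_enum (S : CSig) : ∃ r : ℕ → Req S, ∀ q B, ∃ s, B ≤ s ∧ r s = q := by
  have : ∀ n, Countable (CFormula S n) := countable_CFormula S
  have : Nonempty (Req S) := ⟨⟨0, (.const 0, fun i => i.elim0), 0⟩⟩
  obtain ⟨r0, hr0⟩ := exists_surjective_nat (Req S)
  refine ⟨fun s => r0 s.unpair.2, fun q B => ?_⟩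
  obtain ⟨m, rfl⟩ := hr0 q
  exact ⟨Nat.pair B m, Nat.left_le_pair B m, by simp⟩

/-- The limit pre-code of an agreeing sequence of stages. -/
theorem exists_limit {S : CSig} {T : CTheory S} (Q : ℕ → Stg T)
    (hQ : ∀ s, Agree s (Q s) (Q (s + 1))) :
    ∃ (N : CStructure S) (u : Idx → N.Carrier), DenseRange u ∧
      (∀ s i j, rk i ≤ s → rk j ≤ s → dist (u i) (u j) = dist ((Q s).u i) ((Q s).u j)) ∧
      (∀ s i (v : Fin (S.arity i) → Idx), (∀ j, rk (v j) ≤ s) →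
        N.rel i (u ∘ v) = (Q s).M.rel i ((Q s).u ∘ v)) := by
  have hle : ∀ s t, s ≤ t → Agree s (Q s) (Q t) := by
    intro s t hst
    induction t, hst using Nat.le_induction with
    | base => exact Agree.refl _ _
    | succ t hst ih => exact ih.trans ((hQ t).mono hst)
  let dd : Idx → Idx → ℝ := fun i j =>
    dist ((Q (max (rk i) (rk j))).u i) ((Q (max (rk i) (rk j))).u j)
  let top : ∀ {m : ℕ}, (Fin m → Idx) → ℕ := fun v => Finset.univ.sup (rk ∘ v)
  have htop : ∀ {m : ℕ} (v : Fin m → Idx) (j : Fin m), rk (v j) ≤ top v := fun v j =>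
    Finset.le_sup (f := rk ∘ v) (Finset.mem_univ j)
  let R : ∀ i, (Fin (S.arity i) → Idx) → ℝ := fun i v =>
    (Q (top v)).M.rel i ((Q (top v)).u ∘ v)
  have hdd : ∀ s i j, rk i ≤ s → rk j ≤ s → dd i j = dist ((Q s).u i) ((Q s).u j) := by
    intro s i j hi hj
    exact (hle _ s (max_le hi hj)).1 i j (le_max_left _ _) (le_max_right _ _)
  have hR : ∀ s i (v : Fin (S.arity i) → Idx), (∀ j, rk (v j) ≤ s) →
      R i v = (Q s).M.rel i ((Q s).u ∘ v) := by
    intro s i v hv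
    exact (hle _ s (Finset.sup_le fun j _ => hv j)).2 i v (htop v)
  let x : PreCode S Idx :=
    { dd := dd
      R := R
      dd_le_one := fun i j => (Q _).M.bounded _ _
      dd_self := fun i => dist_self _
      dd_symm := fun i j => by
        rw [hdd (max (rk i) (rk j)) i j (le_max_left _ _) (le_max_right _ _),
          hdd (max (rk i) (rk j)) j i (le_max_right _ _) (le_max_left _ _), dist_comm]
      dd_triangle := fun i j k => by
        obtain ⟨s, hi, hj, hk⟩ : ∃ s, rk i ≤ s ∧ rk j ≤ s ∧ rk k ≤ s :=
          ⟨rk i + rk j + rk k, by omega, by omega, by omega⟩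
        rw [hdd s i k hi hk, hdd s i j hi hj, hdd s j k hj hk]
        exact dist_triangle _ _ _
      R_nonneg := fun i v => (Q _).M.rel_nonneg _ _
      R_le_one := fun i v => (Q _).M.rel_le_one _ _
      R_uc := fun i ε hε v w h => by
        have hv : ∀ j, rk (v j) ≤ max (top v) (top w) := fun j =>
          (htop v j).trans (le_max_left _ _)
        have hw : ∀ j, rk (w j) ≤ max (top v) (top w) := fun j =>
          (htop w j).trans (le_max_right _ _)
        rw [hR _ i v hv, hR _ i w hw]
        refine (Q _).M.rel_uc i ε hε _ _ fun j => ?_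
        have := h j
        rw [hdd _ _ _ (hv j) (hw j)] at this
        exact this }
  obtain ⟨N, u, hu, hd, hr⟩ := x.exists_completion
  refine ⟨N, u, hu, ?_, ?_⟩
  · intro s i j hi hj
    rw [hd]
    exact hdd s i j hi hj
  · intro s i v hv
    rw [hr]
    exact hR s i v hv

theorem supCl_limit {S : CSig} {T : CTheory S} (Q : ℕ → Stg T)
    (N : CStructure S) (u : Idx → N.Carrier) (hu : DenseRange u)
    (hd : ∀ s i j, rk i ≤ s → rk j ≤ s → dist (u i) (u j) = dist ((Q s).u i) ((Q s).u j))
    (hR : ∀ s i (v : Fin (S.arity i) → Idx), (∀ j, rk (v j) ≤ s) →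
        N.rel i (u ∘ v) = (Q s).M.rel i ((Q s).u ∘ v))
    {n : ℕ} {φ : CFormula S n} (hφ : SupCl (fun _ ψ => IsQF ψ) φ) :
    ∀ a : Fin n → Idx, (∀ s, (Q s).M.eval n φ ((Q s).u ∘ a) ≤ 0) →
      N.eval n φ (u ∘ a) ≤ 0 := by
  induction hφ with
  | base hq =>
    intro a h
    have htop : ∀ j, rk (a j) ≤ Finset.univ.sup (rk ∘ a) := fun j =>
      Finset.le_sup (f := rk ∘ a) (Finset.mem_univ j)
    rw [qf_congr N (Q (Finset.univ.sup (rk ∘ a))).M hq (u ∘ a)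
      ((Q (Finset.univ.sup (rk ∘ a))).u ∘ a) (fun i j => hd _ _ _ (htop i) (htop j))
      (fun i ts => hR _ i (a ∘ ts) fun j => htop _)]
    exact h _
  | @step n φ _ ih =>
    intro a h
    simp only [CStructure.eval]
    rw [N.sup_dense φ u hu]
    refine ciSup_le fun i => ?_
    rw [← comp_snoc']
    refine ih _ fun s => ?_
    rw [comp_snoc']
    have h1 := h s
    simp only [CStructure.eval] at h1
    exact (le_ciSup ((Q s).M.bddAbove_eval φ fun x => Fin.snoc ((Q s).u ∘ a) x) _).trans h1

theorem exists_ec {S : CSig} {T : CTheory S} (hU : IsUniversalTheory T) (x : SCode S)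
    (hx : x.SatT T) : ∃ (N : CStructure S) (u : Idx → N.Carrier), DenseRange u ∧ IsEC T N ∧
      (∀ i j, dist (u (.inl i)) (u (.inl j)) = x.dd i j) ∧
      ∀ i (v : Fin (S.arity i) → ℕ), N.rel i (u ∘ Sum.inl ∘ v) = x.R i v := by
  obtain ⟨M0, w, hw, hwd, hwR⟩ := x.toPre.exists_completion
  have hM0 : M0.SatT T := (x.satT_iff M0 ⟨w, hw, hwd, hwR⟩ T).1 hx
  obtain ⟨r, hr⟩ := exists_enum S
  choose F hF1 hF2 using fun (s : ℕ) (A : Stg T) => exists_step s (r s) A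
  let Q : ℕ → Stg T := fun s =>
    Nat.rec ⟨M0, Sum.elim w (fun _ => w 0), hM0⟩ (fun s A => F s A) s
  have hQ : ∀ s, Agree s (Q s) (Q (s + 1)) := fun s => hF1 s (Q s)
  have hQm : ∀ s, Met s (r s) (Q s) (Q (s + 1)) := fun s => hF2 s (Q s)
  obtain ⟨N, u, hu, hd, hR⟩ := exists_limit Q hQ
  have hN : N.SatT T := by
    obtain ⟨Ax, hA, hiff⟩ := hU
    rw [hiff]
    intro ψ hψ
    refine le_antisymm ?_ (N.eval_mem _ _).1
    have h := supCl_limit Q N u hu hd hR (φ := ψ) (hA ψ hψ) (fun i => i.elim0) (fun s => by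
      have := (hiff _).1 (Q s).sat ψ hψ
      rw [CStructure.sval] at this
      rw [← this]
      apply le_of_eq
      congr 1
      funext i
      exact i.elim0)
    rw [CStructure.sval]
    have h0 : (fun i => i.elim0 : Fin 0 → N.Carrier) = u ∘ (fun i => i.elim0) := by
      funext i
      exact i.elim0
    rw [h0]
    exact h
  refine ⟨N, u, hu, ⟨hN, ?_⟩, ?_, ?_⟩
  · intro P hP f n φ hφ b
    have hfc : Continuous f.toFun := (Isometry.of_dist_eq f.isometry).continuous
    apply le_antisymm
    · simp only [CStructure.eval]
      refine le_ciInf fun c => ?_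
      refine (ciInf_le (P.bddBelow_eval φ fun x => Fin.snoc (f.toFun ∘ b) x)
        (f.toFun c)).trans (le_of_eq ?_)
      rw [← comp_snoc']
      exact qf_congr P N hφ _ _ (fun i j => f.isometry _ _) (fun i ts => f.map_rel i _)
    · have hdn : DenseRange (fun (v : Fin n → Idx) (j : Fin n) => u (v j)) :=
        DenseRange.piMap (fun (_ : Fin n) => hu)
      refine hdn.induction_on (p := fun b => N.eval n (.inf φ) b ≤
        P.eval n (.inf φ) (f.toFun ∘ b)) b ?_ ?_
      · refine isClosed_le (N.eval_continuous _) ((P.eval_continuous _).comp ?_)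
        exact continuous_pi fun j => hfc.comp (continuous_apply j)
      · intro a
        refine le_of_forall_pos_le_add fun ε hε => ?_
        obtain ⟨k, hk⟩ := exists_nat_one_div_lt hε
        obtain ⟨s, hs, hrs⟩ := hr ⟨n, (φ, a), k⟩ (Finset.univ.sup (rk ∘ a))
        have has : ∀ j, rk (a j) ≤ s := fun j =>
          (Finset.le_sup (f := rk ∘ a) (Finset.mem_univ j)).trans hs
        have hmet := hQm s
        rw [hrs] at hmet
        have h1 := hmet has ⟨P, f.toFun ∘ u, hP⟩ ⟨fun i j hi hj => by
            rw [← hd s i j hi hj]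
            exact (f.isometry _ _).symm, fun i v hv => by
            rw [← hR s i v hv]
            exact (f.map_rel i (u ∘ v)).symm⟩
        simp only at h1
        have h2 : N.eval n (.inf φ) (u ∘ a) ≤
            (Q (s + 1)).M.eval (n + 1) φ
              (Fin.snoc ((Q (s + 1)).u ∘ a) ((Q (s + 1)).u (.inr s))) := by
          rw [← comp_snoc']
          have hrk : ∀ j, rk ((Fin.snoc a (.inr s) : Fin (n + 1) → Idx) j) ≤ s + 1 := by
            intro j
            refine Fin.lastCases ?_ (fun j => ?_) j
            · simp [rk]
            · simpa using (has j).trans (Nat.le_succ s)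
          rw [← qf_congr N (Q (s + 1)).M hφ (u ∘ Fin.snoc a (.inr s))
            ((Q (s + 1)).u ∘ Fin.snoc a (.inr s))
            (fun i j => hd _ _ _ (hrk i) (hrk j))
            (fun i ts => hR _ i (Fin.snoc a (.inr s) ∘ ts) fun j => hrk _)]
          rw [comp_snoc']
          simp only [CStructure.eval]
          exact ciInf_le (N.bddBelow_eval φ fun x => Fin.snoc (u ∘ a) x) _
        change N.eval n (.inf φ) (u ∘ a) ≤ P.eval n (.inf φ) ((f.toFun ∘ u) ∘ a) + ε
        linarith
  · intro i j
    rw [hd 0 _ _ le_rfl le_rfl]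
    exact hwd i j
  · intro i v
    rw [hR 0 i (Sum.inl ∘ v) fun j => le_rfl]
    exact hwR i v

/-- Re-enumerate the dense set injectively, keeping the first `K` points. -/
theorem exists_inj_enum {X : Type} (u : Idx → X)
    (hinj : Function.Injective fun i : ℕ => u (.inl i)) (K : ℕ) :
    ∃ e : ℕ → X, Function.Injective e ∧ (∀ i, i < K → e i = u (.inl i)) ∧
      Set.range u ⊆ Set.range e := by
  let F : Set X := (fun i : ℕ => u (.inl i)) '' {i | i < K}
  have hF : F.Finite := (Set.finite_lt_nat K).image _
  let D : Set X := Set.range u \ F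
  have hDc : D.Countable := (Set.countable_range u).mono Set.sdiff_subset
  have hDi : D.Infinite := by
    refine Set.Infinite.sdiff ?_ hF
    refine (Set.infinite_range_of_injective hinj).mono ?_
    rintro _ ⟨i, rfl⟩
    exact ⟨_, rfl⟩
  have : Countable D := hDc.to_subtype
  have : Infinite D := hDi.to_subtype
  obtain ⟨g⟩ : Nonempty (ℕ ≃ D) := by
    obtain ⟨h⟩ := nonempty_denumerable D
    exact ⟨(Denumerable.eqv D).symm⟩
  refine ⟨fun i => if i < K then u (.inl i) else (g (i - K) : X), ?_, ?_, ?_⟩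
  · intro i j hij
    simp only at hij
    split_ifs at hij with h1 h2 h2
    · exact hinj hij
    · exact absurd ⟨i, h1, hij⟩ (g (j - K)).2.2
    · exact absurd ⟨j, h2, hij.symm⟩ (g (i - K)).2.2
    · have := g.injective (Subtype.ext hij)
      omega
  · intro i hi
    simp [hi]
  · intro y hy
    by_cases hyF : y ∈ F
    · obtain ⟨i, hi, rfl⟩ := hyF
      exact ⟨i, if_pos hi⟩
    · refine ⟨K + g.symm ⟨y, hy, hyF⟩, ?_⟩
      simp

/-- For a universal theory `T`, the set of separable existentially
closed models of `T` is dense in `𝔖_T`. -/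
theorem ec_dense_in_ST (S : CSig) (T : CTheory S) (hT : IsTheory T)
    (hU : IsUniversalTheory T) :
    Dense {y : {x : SCode S // x.SatT T} | ∃ M : CStructure S, Codes y.1 M ∧ IsEC T M} := by
  rw [dense_iff_inter_open]
  rintro U hUo ⟨⟨x, hx⟩, hxU⟩
  obtain ⟨W, hW, rfl⟩ := isOpen_induced_iff.1 hUo
  obtain ⟨K, hK⟩ := open_finite_support W hW x hxU
  obtain ⟨N, u, hu, hEC, hd, hR⟩ := exists_ec hU x hx
  have hinj : Function.Injective fun i : ℕ => u (.inl i) := by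
    intro i j hij
    by_contra hne
    have h1 := x.dd_pos i j hne
    rw [← hd i j] at h1
    simp only at hij
    rw [hij, dist_self] at h1
    exact lt_irrefl _ h1
  obtain ⟨e, he, heK, hrange⟩ := exists_inj_enum u hinj K
  have hde : DenseRange e := Dense.mono hrange hu
  let y : SCode S :=
    { dd := fun i j => dist (e i) (e j)
      R := fun i v => N.rel i (e ∘ v)
      dd_nonneg := fun _ _ => dist_nonneg
      dd_le_one := fun _ _ => N.bounded _ _
      dd_self := fun _ => dist_self _
      dd_pos := fun i j hij => dist_pos.2 fun h => hij (he h)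
      dd_symm := fun _ _ => dist_comm _ _
      dd_triangle := fun _ _ _ => dist_triangle _ _ _
      R_nonneg := fun _ _ => N.rel_nonneg _ _
      R_le_one := fun _ _ => N.rel_le_one _ _
      R_uc := fun i ε hε v w h => N.rel_uc i ε hε _ _ h }
  have hy : Codes y N := ⟨e, hde, fun _ _ => rfl, fun _ _ => rfl⟩
  refine ⟨⟨y, (y.satT_iff N hy T).2 hEC.1⟩, ?_, N, hy, hEC⟩
  refine hK y (fun i j hi hj => ?_) (fun i v hv => ?_)
  · change x.dd i j = dist (e i) (e j)
    rw [heK i hi, heK j hj, hd]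
  · change x.R i v = N.rel i (e ∘ v)
    rw [← hR i v]
    congr 1
    funext j
    exact (heK _ (hv j)).symm
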